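/- Let δ>0 and s ∈ (0,1). The function r ↦ G_δ(s,r) is twice differentiable on (s,1), and for every r ∈ (s,1), with z = z(s,r) = s(1−r)/(r(1−s)), one has d²/dr² G_δ(s,r) = −(K(δ)/4) · (r−s)^{δ/2−1} · s^{1/2} · (1−r)^{−3/2} · r^{−(δ+1)/2} · (1−s)^{(3−δ)/2} · ₂F₁((δ+1)/2,(δ−3)/2,δ/2,z). -/

import Mathlib

open MeasureTheory Real Filter

/-- Ascending Pochhammer symbol `(a)_k = a(a+1)⋯(a+k-1)`. -/
noncomputable def poch (a : ℝ) (k : ℕ) : ℝ := ∏ i ∈ Finset.range k, (a + i)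

/-- Gauss hypergeometric function `₂F₁(a,b,c,z) = ∑ (a)_k (b)_k / (k! (c)_k) z^k`. -/
noncomputable def hyp2F1 (a b c z : ℝ) : ℝ :=
  ∑' k : ℕ, (poch a k * poch b k) / ((Nat.factorial k : ℝ) * poch c k) * z ^ k

/-- `K(δ) = 2 Γ((δ+1)/2)² / Γ(δ/2)²`. -/
noncomputable def Kcoef (δ : ℝ) : ℝ :=
  2 * Real.Gamma ((δ + 1) / 2) ^ 2 / Real.Gamma (δ / 2) ^ 2

/-- Two-point kernel `G_δ(s,r)`, equal to the second moment `E^δ[X_s X_r]` of a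
δ-dimensional Bessel bridge from 0 to 0 over [0,1]. -/
noncomputable def twoPt (δ s r : ℝ) : ℝ :=
  if s < r then
    Kcoef δ * (r - s) ^ (δ / 2 + 1) * (s * (1 - r)) ^ ((1 : ℝ) / 2) *
      (r * (1 - s)) ^ (-((δ + 1) / 2)) *
      hyp2F1 ((δ + 1) / 2) ((δ + 1) / 2) (δ / 2) (s * (1 - r) / (r * (1 - s)))
  else
    Kcoef δ * (s - r) ^ (δ / 2 + 1) * (r * (1 - s)) ^ ((1 : ℝ) / 2) *
      (s * (1 - r)) ^ (-((δ + 1) / 2)) *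
      hyp2F1 ((δ + 1) / 2) ((δ + 1) / 2) (δ / 2) (r * (1 - s) / (s * (1 - r)))

/-- Coefficient `D(s,r)`. -/
noncomputable def Dcoef (s r : ℝ) : ℝ :=
  if s < r then (1 - s) / ((r - s) * (1 - r)) else s / (r * (s - r))

/-- Coefficient `C_k = Γ(k+(δ+1)/2)/(Γ(δ/2) Γ(k+δ/2) k!)`. -/
noncomputable def Ccoef (δ : ℝ) (k : ℕ) : ℝ :=
  Real.Gamma ((k : ℝ) + (δ + 1) / 2) /
    (Real.Gamma (δ / 2) * Real.Gamma ((k : ℝ) + δ / 2) * (Nat.factorial k : ℝ))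

/-- Coefficient `f_k(s,r)`. -/
noncomputable def fcoef (s r : ℝ) (k : ℕ) : ℝ :=
  if s < r then (2 * (r - s)) ^ ((1 : ℝ) / 2 - (k : ℝ)) * (s / r) ^ ((k : ℝ) + 1 / 2)
  else (2 * (s - r)) ^ ((1 : ℝ) / 2 - (k : ℝ)) * ((1 - s) / (1 - r)) ^ ((k : ℝ) + 1 / 2)

/-- `Σ^δ_{r,s}(b) = Σ^δ_r(X_s | b)`, the density-weighted conditional expectation of a
δ-dimensional Bessel bridge. -/
noncomputable def SigmaRS (δ r s b : ℝ) : ℝ :=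
  ((2 : ℝ) ^ (δ / 2 - 1) * (r * (1 - r)) ^ (δ / 2))⁻¹ *
    Real.exp (-(Dcoef s r) * b ^ 2 / 2) *
    ∑' k : ℕ, Ccoef δ k * fcoef s r k * b ^ (2 * k)

/-- All power-series moments are summable on (0,1). -/
def GoodCoef (f : ℕ → ℝ) : Prop := ∀ x : ℝ, 0 < x → x < 1 → Summable (fun k => |f k| * x ^ k)

theorem GoodCoef.mul_nat {f : ℕ → ℝ} (hf : GoodCoef f) : GoodCoef (fun k => (k : ℝ) * f k) := by
  intro x hx0 hx1
  obtain ⟨y, hxy, hy1⟩ := exists_between hx1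
  have hy0 : 0 < y := hx0.trans hxy
  have ht := tendsto_self_mul_const_pow_of_lt_one (r := x / y) (by positivity)
    ((div_lt_one hy0).2 hxy)
  have hb := ht.isBigO_one ℝ
  have h2 := hb.mul (Asymptotics.isBigO_refl (fun k : ℕ => |f k| * y ^ k) atTop)
  refine summable_of_isBigO_nat (hf y hy0 hy1) ?_
  refine (h2.congr' ?_ ?_)
  · refine Eventually.of_forall fun k => ?_
    simp only [abs_mul, Nat.abs_cast, div_pow]
    field_simp
  · refine Eventually.of_forall fun k => ?_
    simp

theorem GoodCoef.summable {f : ℕ → ℝ} (hf : GoodCoef f) {x : ℝ} (hx0 : 0 < x) (hx1 : x < 1) :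
    Summable (fun k => f k * x ^ k) := by
  refine Summable.of_abs ((hf x hx0 hx1).congr fun k => ?_)
  rw [abs_mul, abs_of_pos (pow_pos hx0 k)]

theorem GoodCoef.hasDerivAt {f : ℕ → ℝ} (hf : GoodCoef f) {x : ℝ} (hx0 : 0 < x) (hx1 : x < 1) :
    HasDerivAt (fun z => ∑' k : ℕ, f k * z ^ k) ((∑' k : ℕ, ((k : ℝ) * f k) * x ^ k) / x) x := by
  obtain ⟨y, hxy, hy1⟩ := exists_between hx1
  have hy0 : 0 < y := hx0.trans hxy
  have hu : Summable (fun k : ℕ => |(k : ℝ) * f k| * y ^ k / y) := (hf.mul_nat y hy0 hy1).div_const y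
  have key := hasDerivAt_tsum_of_isPreconnected (t := Set.Ioo 0 y)
    (g := fun k z => f k * z ^ k) (g' := fun k z => f k * ((k : ℝ) * z ^ (k - 1)))
    (y₀ := x) (y := x) hu
    isOpen_Ioo isPreconnected_Ioo ?_ ?_ ⟨hx0, hxy⟩ (hf.summable hx0 hx1) ⟨hx0, hxy⟩
  · have e : (∑' k : ℕ, ((k : ℝ) * f k) * x ^ k) / x
        = ∑' k : ℕ, f k * ((k : ℝ) * x ^ (k - 1)) := ?_
    · rw [e]; exact key
    rw [← tsum_div_const]
    refine tsum_congr fun k => ?_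
    rcases k with _ | k
    · simp
    · simp only [Nat.add_sub_cancel, pow_succ]
      field_simp
  · intro k z _
    exact (hasDerivAt_pow k z).const_mul (f k)
  · intro k z hz
    rcases k with _ | k
    · simp
    · simp only [Nat.add_sub_cancel, pow_succ, norm_eq_abs]
      rw [← mul_assoc (|_|), mul_div_assoc, div_self hy0.ne', mul_one, ← mul_assoc, abs_mul,
        mul_comm (f _), abs_of_nonneg (pow_nonneg hz.1.le k)]
      exact mul_le_mul_of_nonneg_left (pow_le_pow_left₀ hz.1.le hz.2.le k) (abs_nonneg _)

theorem poch_succ (a : ℝ) (k : ℕ) : poch a (k + 1) = poch a k * (a + k) := by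
  simp [poch, Finset.prod_range_succ]

theorem poch_zero (a : ℝ) : poch a 0 = 1 := by simp [poch]

theorem poch_pos {a : ℝ} (ha : 0 < a) (k : ℕ) : 0 < poch a k :=
  Finset.prod_pos fun i _ => by positivity

theorem poch_sub_two (a : ℝ) (k : ℕ) :
    poch (a - 2) (k + 2) = (a - 2) * (a - 1) * poch a k := by
  induction k with
  | zero => simp [poch, Finset.prod_range_succ]; left; ring
  | succ k ih =>
    rw [poch_succ, ih, poch_succ]; push_cast; ring

/-- Coefficients of the hypergeometric series. -/
noncomputable def fco (a c : ℝ) (k : ℕ) : ℝ :=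
  (poch a k * poch a k) / ((Nat.factorial k : ℝ) * poch c k)

theorem fco_pos {a c : ℝ} (ha : 0 < a) (hc : 0 < c) (k : ℕ) : 0 < fco a c k := by
  have := poch_pos ha k
  have := poch_pos hc k
  unfold fco; positivity

theorem fco_succ {a c : ℝ} (hc : 0 < c) (k : ℕ) :
    fco a c (k + 1) = fco a c k * ((a + k) ^ 2 / ((k + 1) * (c + k))) := by
  have := poch_pos hc k
  have : c + k ≠ 0 := by positivity
  unfold fco
  rw [poch_succ, poch_succ, Nat.factorial_succ]
  push_cast
  field_simp

theorem fco_good {a c : ℝ} (ha : 0 < a) (hc : 0 < c) : GoodCoef (fco a c) := by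
  intro x hx0 hx1
  refine summable_of_ratio_test_tendsto_lt_one hx1 (Eventually.of_forall fun k => ?_) ?_
  · have := fco_pos ha hc k
    positivity
  · have h1 := tendsto_add_mul_div_add_mul_atTop_nhds a 1 1 (one_ne_zero (α := ℝ))
    have h2 := tendsto_add_mul_div_add_mul_atTop_nhds a c 1 (one_ne_zero (α := ℝ))
    have h3 := (h1.mul h2).mul_const x
    simp only [div_one, one_mul] at h3
    refine h3.congr fun k => ?_
    have := fco_pos ha hc k
    have : c + k ≠ 0 := by positivity
    rw [fco_succ hc, abs_mul, abs_of_nonneg (a := (a + k) ^ 2 / ((k + 1) * (c + k)))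
      (by positivity), norm_mul, norm_mul, norm_mul, norm_pow, norm_pow]
    simp only [norm_eq_abs, abs_abs]
    rw [abs_of_pos hx0, abs_of_pos (fco_pos ha hc k),
      abs_of_nonneg (a := (a + k) ^ 2 / ((k + 1) * (c + k))) (by positivity), pow_succ]
    field_simp
    ring

theorem hasSum_of_eq {f g : ℕ → ℝ} {x y : ℝ} (h : HasSum g y) (e1 : ∀ k, f k = g k)
    (e2 : x = y) : HasSum f x := by
  rw [funext e1, e2]; exact h

/-- The contiguity-type identity. -/
theorem key_identity {a c z : ℝ} (hc : 0 < c) (hac : a = c + 1 / 2) (hz0 : 0 < z) (hz1 : z < 1) :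
    hyp2F1 a (a - 2) c z = -4 * ((1 - z) ^ 2 * (∑' k : ℕ, ((k : ℝ) * ((k : ℝ) * fco a c k)) * z ^ k)
      - 2 * (c + 1) * z * (1 - z) * (∑' k : ℕ, ((k : ℝ) * fco a c k) * z ^ k)
      + (-(c + 1) * z * (1 - z) + c * (c + 1) * z ^ 2 - (1 - z) ^ 2 / 4)
        * ∑' k : ℕ, fco a c k * z ^ k) := by
  have ha : 0 < a := by linarith
  have hg := fco_good ha hc
  have s0 := (hg.summable hz0 hz1).hasSum
  have s1 := (hg.mul_nat.summable hz0 hz1).hasSum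
  have s2 := (hg.mul_nat.mul_nat.summable hz0 hz1).hasSum
  set F0 := ∑' k : ℕ, fco a c k * z ^ k
  set F1 := ∑' k : ℕ, ((k : ℝ) * fco a c k) * z ^ k
  set F2 := ∑' k : ℕ, ((k : ℝ) * ((k : ℝ) * fco a c k)) * z ^ k
  have hA := s2.sub (s0.mul_left (1 / 4))
  have hB := ((s2.mul_left (-2)).sub (s1.mul_left (2 * (c + 1)))).sub (s0.mul_left (c + 1 / 2))
  have hC := (s2.add (s1.mul_left (2 * (c + 1)))).add (s0.mul_left ((c + 1) ^ 2 - 1 / 4))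
  have hA' := (hasSum_nat_add_iff' 2).2 hA
  have hB' := ((hasSum_nat_add_iff' 1).2 hB).mul_left z
  have hC' := hC.mul_left (z ^ 2)
  have hT := ((hA'.add hB').add hC').mul_left (-4)
  unfold hyp2F1
  refine HasSum.tsum_eq ((hasSum_nat_add_iff' 2).1 ?_)
  refine hasSum_of_eq hT (fun k => ?_) ?_
  · clear hA hB hC hA' hB' hC' hT
    have e1 := fco_succ (a := a) hc k
    have e2 := fco_succ (a := a) hc (k + 1)
    have := poch_pos hc k
    have : c + k ≠ 0 := by positivity
    have : c + k + 1 ≠ 0 := by positivity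
    have : c + (k + 1) ≠ 0 := by positivity
    have : (k : ℝ) + 1 + 1 ≠ 0 := by positivity
    rw [show k + 2 = k + 1 + 1 from rfl, e2, e1, show k + 1 + 1 = k + 2 from rfl, poch_sub_two]
    rw [show k + 2 = k + 1 + 1 from rfl, poch_succ, poch_succ, poch_succ, poch_succ,
      Nat.factorial_succ, Nat.factorial_succ]
    unfold fco
    subst hac
    push_cast
    field_simp
    ring
  · simp only [Finset.sum_range_succ, Finset.sum_range_zero, poch, fco, Finset.prod_range_succ,
      Finset.prod_range_zero]
    subst hac
    norm_num
    field_simp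
    ring

theorem twoPt_second_derivative (δ : ℝ) (hδ : 0 < δ) (s : ℝ) (hs : s ∈ Set.Ioo (0 : ℝ) 1)
    (r : ℝ) (hr : r ∈ Set.Ioo s 1) :
    DifferentiableAt ℝ (fun r => twoPt δ s r) r ∧
    DifferentiableAt ℝ (deriv (fun r => twoPt δ s r)) r ∧
    deriv (deriv (fun r => twoPt δ s r)) r
      = -(Kcoef δ / 4) * (r - s) ^ (δ / 2 - 1) * s ^ ((1 : ℝ) / 2) *
          (1 - r) ^ (-(3 : ℝ) / 2) * r ^ (-((δ + 1) / 2)) * (1 - s) ^ ((3 - δ) / 2) *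
          hyp2F1 ((δ + 1) / 2) ((δ - 3) / 2) (δ / 2) (s * (1 - r) / (r * (1 - s))) := by
  obtain ⟨hs0, hs1⟩ := hs
  have h1s : 0 < 1 - s := by linarith
  have hg := fco_good (a := (δ + 1) / 2) (c := δ / 2) (by positivity) (by positivity)
  set a := (δ + 1) / 2 with ha
  set c := δ / 2 with hc
  have hc0 : 0 < c := by positivity
  have hac : a = c + 1 / 2 := by rw [ha, hc]; ring
  set F0 : ℝ → ℝ := fun z => ∑' k : ℕ, fco a c k * z ^ k with hF0
  set F1 : ℝ → ℝ := fun z => ∑' k : ℕ, ((k : ℝ) * fco a c k) * z ^ k with hF1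
  set F2 : ℝ → ℝ := fun z => ∑' k : ℕ, ((k : ℝ) * ((k : ℝ) * fco a c k)) * z ^ k with hF2
  have d0 : ∀ z, 0 < z → z < 1 → HasDerivAt F0 (F1 z / z) z := fun z h h' => hg.hasDerivAt h h'
  have d1 : ∀ z, 0 < z → z < 1 → HasDerivAt F1 (F2 z / z) z :=
    fun z h h' => hg.mul_nat.hasDerivAt h h'
  set Z : ℝ → ℝ := fun r => s * (1 - r) / (r * (1 - s)) with hZ
  have Zpos : ∀ r ∈ Set.Ioo s 1, 0 < Z r := by
    intro r ⟨h1, h2⟩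
    have : 0 < 1 - r := by linarith
    have : 0 < r := by linarith
    simp only [hZ]; positivity
  have Zlt : ∀ r ∈ Set.Ioo s 1, Z r < 1 := by
    intro r ⟨h1, h2⟩
    have : 0 < r := by linarith
    simp only [hZ]
    rw [div_lt_one (by positivity)]
    nlinarith
  have dZ : ∀ r ∈ Set.Ioo s 1, HasDerivAt Z (-(Z r) / (r * (1 - r))) r := by
    intro r ⟨h1, h2⟩
    have h3 : 1 - r ≠ 0 := by linarith
    have h4 : r ≠ 0 := by linarith
    have := (((hasDerivAt_id r).const_sub 1).const_mul s).div ((hasDerivAt_id r).mul_const (1 - s))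
      (by simp only [id]; positivity)
    refine HasDerivAt.congr_deriv this ?_
    simp only [hZ, id]
    field_simp
    ring
  have dFZ : ∀ (F F' : ℝ → ℝ), (∀ z, 0 < z → z < 1 → HasDerivAt F (F' z / z) z) →
      ∀ r ∈ Set.Ioo s 1, HasDerivAt (fun r => F (Z r)) (-(F' (Z r)) / (r * (1 - r))) r := by
    intro F F' h r hr
    have := (h (Z r) (Zpos r hr) (Zlt r hr)).comp r (dZ r hr)
    refine HasDerivAt.congr_deriv this ?_
    have := (Zpos r hr).ne'
    field_simp
  -- prefactor
  set P : ℝ → ℝ := fun r => Kcoef δ * (r - s) ^ (c + 1) * (s * (1 - r)) ^ ((1 : ℝ) / 2) *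
      (r * (1 - s)) ^ (-a) with hP
  set L : ℝ → ℝ := fun r => (c + 1) / (r - s) - 1 / 2 / (1 - r) - a / r with hL
  have dP : ∀ r ∈ Set.Ioo s 1, HasDerivAt P (P r * L r) r := by
    intro r ⟨h1, h2⟩
    have h3 : 0 < 1 - r := by linarith
    have h4 : 0 < r := by linarith
    have h5 : 0 < r - s := by linarith
    have e1 := ((hasDerivAt_id r).sub_const s).rpow_const (p := c + 1) (Or.inl h5.ne')
    have e2 := (((hasDerivAt_id r).const_sub 1).const_mul s).rpow_const (p := (1 : ℝ) / 2)
      (Or.inl (by simp only [id]; positivity))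
    have e3 := ((hasDerivAt_id r).mul_const (1 - s)).rpow_const (p := -a)
      (Or.inl (by simp only [id]; positivity))
    have := ((e1.const_mul (Kcoef δ)).mul e2).mul e3
    refine HasDerivAt.congr_deriv this ?_
    simp only [hP, hL, id, Pi.mul_apply]
    rw [rpow_sub_one h5.ne', rpow_sub_one (by positivity : s * (1 - r) ≠ 0),
      rpow_sub_one (by positivity : r * (1 - s) ≠ 0)]
    field_simp
    ring
  have dL : ∀ r ∈ Set.Ioo s 1,
      HasDerivAt L (-(c + 1) / (r - s) ^ 2 - 1 / 2 / (1 - r) ^ 2 + a / r ^ 2) r := by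
    intro r ⟨h1, h2⟩
    have h3 : 1 - r ≠ 0 := by linarith
    have h4 : r ≠ 0 := by linarith
    have h5 : r - s ≠ 0 := by linarith
    have := (((hasDerivAt_const r (c + 1)).div ((hasDerivAt_id r).sub_const s) h5).sub
      ((hasDerivAt_const r ((1 : ℝ) / 2)).div ((hasDerivAt_id r).const_sub 1) h3)).sub
      ((hasDerivAt_const r a).div (hasDerivAt_id r) h4)
    refine HasDerivAt.congr_deriv this ?_
    simp only [id]
    field_simp
    ring
  have dV : ∀ r ∈ Set.Ioo s 1,
      HasDerivAt (fun r => r * (1 - r)) (1 - 2 * r) r := by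
    intro r _
    have := (hasDerivAt_id r).mul ((hasDerivAt_id r).const_sub 1)
    refine HasDerivAt.congr_deriv this ?_
    simp only [id]
    ring
  have hev : ∀ r ∈ Set.Ioo s 1, Set.Ioo s 1 ∈ nhds r := fun r hr => isOpen_Ioo.mem_nhds hr
  have dG : ∀ r ∈ Set.Ioo s 1, HasDerivAt (fun r => twoPt δ s r)
      (P r * (L r * F0 (Z r) + -(F1 (Z r)) / (r * (1 - r)))) r := by
    intro r hr
    have h := (dP r hr).mul (dFZ F0 F1 d0 r hr)
    have h' : HasDerivAt (fun r => twoPt δ s r) _ r := h.congr_of_eventuallyEq (by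
      filter_upwards [hev r hr] with x hx
      simp only [twoPt, if_pos hx.1, Pi.mul_apply]
      rfl)
    refine HasDerivAt.congr_deriv h' ?_
    ring
  have dG2 := fun r hr => (dP r hr).mul (((dL r hr).mul (dFZ F0 F1 d0 r hr)).add
    ((dFZ F1 F2 d1 r hr).neg.div (dV r hr) (by
      have : 0 < 1 - r := by linarith [hr.2]
      have : 0 < r := by linarith [hr.1]
      positivity)))
  have hd2 : HasDerivAt (deriv (fun r => twoPt δ s r)) _ r := (dG2 r hr).congr_of_eventuallyEq (by
    filter_upwards [hev r hr] with x hx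
    rw [(dG x hx).deriv]
    rfl)
  refine ⟨(dG r hr).differentiableAt, hd2.differentiableAt, ?_⟩
  rw [hd2.deriv]
  obtain ⟨h1, h2⟩ := hr
  have h3 : 0 < 1 - r := by linarith
  have h4 : 0 < r := by linarith
  have h5 : 0 < r - s := by linarith
  have hk := key_identity (a := a) hc0 hac (Zpos r ⟨h1, h2⟩) (Zlt r ⟨h1, h2⟩)
  have e : (δ - 3) / 2 = a - 2 := by rw [ha]; ring
  have hk' : hyp2F1 a ((δ - 3) / 2) c (s * (1 - r) / (r * (1 - s))) = _ := e ▸ hk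
  rw [hk']
  have hPr : P r = Kcoef δ * ((r - s) ^ (c - 1) * (r - s) ^ 2) * s ^ ((1 : ℝ) / 2) *
      ((1 - r) ^ (-(3 : ℝ) / 2) * (1 - r) ^ 2) * r ^ (-a) *
      ((1 - s) ^ ((3 - δ) / 2) / (1 - s) ^ 2) := by
    simp only [hP]
    rw [mul_rpow hs0.le h3.le, mul_rpow h4.le h1s.le, ← rpow_natCast (r - s) 2,
      ← rpow_natCast (1 - r) 2, ← rpow_natCast (1 - s) 2, ← rpow_add h5, ← rpow_add h3,
      ← rpow_sub h1s, show c - 1 + ((2 : ℕ) : ℝ) = c + 1 by push_cast; ring,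
      show -(3 : ℝ) / 2 + ((2 : ℕ) : ℝ) = 1 / 2 by norm_num,
      show (3 - δ) / 2 - ((2 : ℕ) : ℝ) = -a by rw [ha]; push_cast; ring]
    ring
  have hZr : Z r = s * (1 - r) / (r * (1 - s)) := rfl
  change P r * L r * (L r * F0 (Z r) + -(F1 (Z r)) / (r * (1 - r))) + P r *
    ((-(c + 1) / (r - s) ^ 2 - 1 / 2 / (1 - r) ^ 2 + a / r ^ 2) * F0 (Z r) +
      L r * (-(F1 (Z r)) / (r * (1 - r))) +
      ((-(-(F2 (Z r)) / (r * (1 - r)))) * (r * (1 - r)) - -(F1 (Z r)) * (1 - 2 * r)) /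
        (r * (1 - r)) ^ 2) = _ * (-4 * ((1 - Z r) ^ 2 * F2 (Z r)
      - 2 * (c + 1) * Z r * (1 - Z r) * F1 (Z r)
      + (-(c + 1) * Z r * (1 - Z r) + c * (c + 1) * Z r ^ 2 - (1 - Z r) ^ 2 / 4)
        * F0 (Z r)))
  rw [hPr]
  generalize F0 (Z r) = f0
  generalize F1 (Z r) = f1
  generalize F2 (Z r) = f2
  rw [hZr]
  simp only [hL]
  generalize (r - s) ^ (c - 1) = q1
  generalize s ^ ((1 : ℝ) / 2) = q2
  generalize (1 - r) ^ (-(3 : ℝ) / 2) = q3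
  generalize r ^ (-a) = q4
  generalize (1 - s) ^ ((3 - δ) / 2) = q5
  generalize Kcoef δ = K
  rw [hac]
  have h6 : 1 - s ≠ 0 := h1s.ne'
  have main : ((c + 1) / (r - s) - 1 / 2 / (1 - r) - (c + 1 / 2) / r) = 
     ((c + 1) * (2 * r * (1 - r)) - r * (r - s) - (2 * c + 1) * (r - s) * (1 - r)) / 
     (2 * r * (r - s) * (1 - r)) := by
    field_simp
  rw [main]
  clear_value c a
  have h7 : (1 - s * (1 - r) / (r * (1 - s))) = (r - s) / (r * (1 - s)) := by
    field_simp
    ring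
  rw [h7]
  field_simp
  ring
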